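/- arXiv:math/0412124 — 3 statements merged into one kernel-verified Lean document; each statement's English description precedes it below -/
import Mathlib

section
/- For every ab-polynomial u ∈ ℤ⟨a,b⟩, the Tchebyshev transform satisfies the recursion T(c²·u) = 2c·T(c·u) + (2d − c²)·T(u), where c = a + b and d = ab + ba. -/
open scoped TensorProduct

noncomputable section

namespace Tcheb

/-! ### The algebra `R⟨a,b⟩` of ab-polynomials -/

/-- Words in the two noncommuting letters `a` (encoded `true`) and `b` (encoded `false`). -/
abbrev ABWord : Type := FreeMonoid Bool

/-- The ring `R⟨a,b⟩` of polynomials in two noncommuting variables `a` and `b`. -/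
abbrev AB (R : Type) [CommRing R] : Type := MonoidAlgebra R ABWord

variable (R : Type) [CommRing R]

/-- The ab-monomial corresponding to a word. -/
def word (l : List Bool) : AB R := MonoidAlgebra.of R ABWord (FreeMonoid.ofList l)

/-- The variable `a`. -/
def av : AB R := word R [true]
/-- The variable `b`. -/
def bv : AB R := word R [false]
/-- `c = a + b`. -/
def cv : AB R := av R + bv R
/-- `d = ab + ba`. -/
def dv : AB R := av R * bv R + bv R * av R
/-- `a - b`. -/
def ev : AB R := av R - bv R

/-- The linear map defined by prescribing values on the basis of ab-monomials. -/
def onBasis {M : Type} [AddCommMonoid M] [Module R M] (f : List Bool → M) :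
    AB R →ₗ[R] M :=
  (Finsupp.lift M R ABWord fun w => f (FreeMonoid.toList w)) ∘ₗ
    (MonoidAlgebra.coeffLinearEquiv R).toLinearMap

/-- The algebra map `A` with `A(a) = 1`, `A(b) = 0`. -/
def Amap : AB R →ₐ[R] R :=
  MonoidAlgebra.lift R R ABWord (FreeMonoid.lift fun x => if x then (1 : R) else 0)

/-- The coproduct on `R⟨a,b⟩`: on an ab-monomial `u₁ ⋯ u_k` it is
`Σ_{i=1}^k u₁ ⋯ u_{i-1} ⊗ u_{i+1} ⋯ u_k`. -/
def Delta : AB R →ₗ[R] AB R ⊗[R] AB R :=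
  onBasis R fun w => ∑ i ∈ Finset.range w.length,
    word R (w.take i) ⊗ₜ[R] word R (w.drop (i + 1))

/-- The linear map `C(u) = 2·A(u) + Σ_u A(u₍₁₎)·A(u₍₂₎)`. -/
def Cmap : AB R →ₗ[R] R :=
  2 • (Amap R).toLinearMap +
    (LinearMap.mul' R R ∘ₗ
      TensorProduct.map (Amap R).toLinearMap (Amap R).toLinearMap) ∘ₗ Delta R

/-- `κ(u) = A(u)·(a-b)^(deg u)` on homogeneous `u`, extended linearly. -/
def kappa : AB R →ₗ[R] AB R :=
  onBasis R fun w => Amap R (word R w) • ev R ^ w.length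

/-- `ν(u) = C(u)·(a-b)^(deg u)` on homogeneous `u`, extended linearly. -/
def nuMap : AB R →ₗ[R] AB R :=
  onBasis R fun w => Cmap R (word R w) • ev R ^ w.length

end Tcheb

namespace Tcheb

/-- Cutting a word into the list of segments between the (sorted) cut positions. -/
def segments : List Bool → List ℕ → List (List Bool)
  | l, [] => [l]
  | l, i :: rest => l.take i :: segments (l.drop (i + 1)) (rest.map fun j => j - (i + 1))
  termination_by _ cuts => cuts.length
  decreasing_by simp

variable (R : Type) [CommRing R]

/-- For segments `[s₁, …, s_k]` this is `ν(s₁)·b·ν(s₂)·b ⋯ b·ν(s_{k-1})·b·κ(s_k)`. -/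
def chainProd : List (List Bool) → AB R
  | [] => 1
  | [s] => kappa R (word R s)
  | s :: rest => nuMap R (word R s) * bv R * chainProd rest

/-- The Tchebyshev transform (of the first kind) on ab-polynomials:
`T(u) = Σ_{k ≥ 1} Σ_u ν(u₍₁₎)·b·ν(u₍₂₎)·b ⋯ b·ν(u₍ₖ₋₁₎)·b·κ(u₍ₖ₎)`,
where the inner sum is over the `k`-fold coproduct.  On the ab-monomial basis this
is the sum, over all sets of positions of deleted letters, of the corresponding
products over the resulting segments. -/
def Tmap : AB R →ₗ[R] AB R :=
  onBasis R fun w => ∑ S : Finset (Fin w.length),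
    chainProd R (segments w ((S.sort (· ≤ ·)).map Fin.val))

/-- The `ω` map on a word: replace each occurrence of `ab` by `2d` and all
remaining letters by `c`. -/
def omegaWord : List Bool → AB R
  | [] => 1
  | true :: false :: rest => (2 * dv R) * omegaWord rest
  | _ :: rest => cv R * omegaWord rest

/-- The `ω` map of Billera–Ehrenborg–Readdy. -/
def omegaMap : AB R →ₗ[R] AB R := onBasis R fun w => omegaWord R w

/-- The reversal involution `u ↦ u*` of ab-polynomials. -/
def revMap : AB R →ₗ[R] AB R := onBasis R fun w => word R w.reverse

/-- `H*(1) = 0` and `H*(u·a) = H*(u·b) = u`. -/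
def Hstar : AB R →ₗ[R] AB R :=
  onBasis R fun w => if w = [] then 0 else word R w.dropLast

/-- The Tchebyshev transform of the second kind `U(u) = H*(T(u·a))`. -/
def Umap : AB R →ₗ[R] AB R := Hstar R ∘ₗ Tmap R ∘ₗ LinearMap.mulRight R (av R)

/-- `σ(u) = Σ_u κ(u₍₁₎)·b·T(u₍₂₎)`. -/
def sigmaMap : AB R →ₗ[R] AB R :=
  LinearMap.mul' R (AB R) ∘ₗ
    TensorProduct.map (LinearMap.mulRight R (bv R) ∘ₗ kappa R) (Tmap R) ∘ₗ Delta R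

/-! ### Graded posets and the ab-index -/

/-- `rk` is a rank function for a bounded poset: `rk ⊥ = 0` and covers raise rank by one. -/
def IsRankFun (α : Type) [PartialOrder α] [OrderBot α] (rk : α → ℕ) : Prop :=
  rk ⊥ = 0 ∧ ∀ x y : α, x ⋖ y → rk y = rk x + 1

/-- `f` lists the elements of a chain in increasing order with respect to the
strict order relation `lt`. -/
def IsStrictChain {α : Type} (lt : α → α → Prop) {n : ℕ} (f : Fin (n + 1) → α) : Prop :=
  ∀ i j : Fin (n + 1), i < j → lt (f i) (f j)

/-- The weight of a chain `x₀ < x₁ < ⋯ < x_k`: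
`(a-b)^{ρ(x₀,x₁)-1}·b·(a-b)^{ρ(x₁,x₂)-1}·b ⋯ b·(a-b)^{ρ(x_{k-1},x_k)-1}`. -/
def chainWt {α : Type} (rk : α → ℕ) {n : ℕ} (f : Fin (n + 1) → α) : AB R :=
  (List.intersperse (bv R)
    (List.ofFn fun i : Fin n => ev R ^ (rk (f i.succ) - rk (f i.castSucc) - 1))).prod

/-- The ab-index `Ψ` of the graded poset with strict order relation `lt`, rank
function `rk`, minimum `b` and maximum `t`: the sum of the weights of all chains
from `b` to `t`. -/
def PsiRel {α : Type} (lt : α → α → Prop) (rk : α → ℕ) (b t : α) : AB R :=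
  ∑ᶠ (n : ℕ), ∑ᶠ (f : Fin (n + 1) → α)
    (_ : IsStrictChain lt f ∧ f 0 = b ∧ f (Fin.last n) = t), chainWt R rk f

end Tcheb

namespace Tcheb

/-! ### The Tchebyshev transform of a graded poset -/

section TPoset

variable (α : Type) [PartialOrder α] [BoundedOrder α]

/-- The elements `[x,y]` of the Tchebyshev transform: intervals of `P ∪ {-1̂}`,
i.e. pairs `(x,y)` with `x ∈ P ∪ {-1̂}`, `y ∈ P` and `x < y`. -/
def TPel : Type := {p : WithBot α × α // p.1 < (p.2 : WithBot α)}

/-- The underlying set of the Tchebyshev transform `T(P)`: the intervals `[x,y]`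
together with a new maximum element (`none`). -/
def TP : Type := Option (TPel α)

/-- The cover relation of the Tchebyshev transform `T(P)`:
`[x,y] ⋖ [y,w]` and `[x,y] ⋖ [x,w]` whenever `y ⋖ w` in `P`, and `[x,1̂] ⋖ 1̂_{T(P)}`. -/
inductive TPcov : TP α → TP α → Prop
  | up {x : WithBot α} {y w : α} (h1 : x < (y : WithBot α))
      (h2 : (y : WithBot α) < (w : WithBot α)) (hc : y ⋖ w) :
      TPcov (some ⟨(x, y), h1⟩) (some ⟨((y : WithBot α), w), h2⟩)
  | same {x : WithBot α} {y w : α} (h1 : x < (y : WithBot α))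
      (h2 : x < (w : WithBot α)) (hc : y ⋖ w) :
      TPcov (some ⟨(x, y), h1⟩) (some ⟨(x, w), h2⟩)
  | top {x : WithBot α} (h1 : x < ((⊤ : α) : WithBot α)) :
      TPcov (some ⟨(x, (⊤ : α)), h1⟩) none

/-- The strict order relation of `T(P)`, generated by the cover relation. -/
def TPlt : TP α → TP α → Prop := Relation.TransGen (TPcov α)

/-- The order relation of `T(P)`, generated by the cover relation. -/
def TPle : TP α → TP α → Prop := Relation.ReflTransGen (TPcov α)

/-- The minimum element `[-1̂, 0̂]` of `T(P)`. -/
def TPbot : TP α := some ⟨((⊥ : WithBot α), (⊥ : α)), WithBot.bot_lt_coe _⟩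

/-- The maximum element `1̂_{T(P)}` of `T(P)`. -/
def TPtop : TP α := none

/-- The rank function of `T(P)`: `ρ([x,y]) = ρ(y)` and `ρ(1̂_{T(P)}) = ρ(P) + 1`. -/
def TPrk (rk : α → ℕ) : TP α → ℕ
  | some p => rk p.1.2
  | none => rk (⊤ : α) + 1

theorem TPbot_ne_TPtop : TPbot α ≠ TPtop α := by exact Option.some_ne_none _

/-- The map `z : T(P) → P ∪ {2̂}` with `z([x,y]) = y` and `z(1̂_{T(P)}) = 2̂`. -/
def zmap : TP α → WithTop α
  | some p => (p.1.2 : WithTop α)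
  | none => ⊤

/-- The number of elements of the interval `[u,v]` of `P`, for `u, v ∈ P ∪ {2̂}`. -/
def intervalCard (u v : WithTop α) : ℕ :=
  Set.ncard {t : α | u ≤ (t : WithTop α) ∧ (t : WithTop α) ≤ v}

end TPoset

/-! ### The dual diamond product -/

/-- The strict order relation of the dual diamond product
`P ◇* Q = ((P ∖ {1̂}) × (Q ∖ {1̂})) ∪ {1̂}` (with `none` the new maximum), built from
the order relations `leA, ltA` and `leB, ltB` of the two factors. -/
def dsLT {A B : Type} (leA ltA : A → A → Prop) (leB ltB : B → B → Prop) :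
    Option (A × B) → Option (A × B) → Prop
  | some p, some q => (leA p.1 q.1 ∧ leB p.2 q.2) ∧ (ltA p.1 q.1 ∨ ltB p.2 q.2)
  | some _, none => True
  | none, _ => False

/-! ### EL-labelings -/

/-- The list of edge labels along a chain (given as a list of poset elements). -/
def labelsList {α Λ : Type} (lam : α → α → Λ) (l : List α) : List Λ :=
  (l.zip l.tail).map fun p => lam p.1 p.2

/-- `l` is a maximal (saturated) chain of the interval `[x,y]` with respect to the
cover relation `cov`: it runs from `x` to `y` and every step is a cover. -/
def IsMaxChainList {α : Type} (cov : α → α → Prop) (x y : α) (l : List α) : Prop :=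
  l.head? = some x ∧ l.getLast? = some y ∧ l.Chain' cov

/-- An `EL`-labeling of the poset whose cover relation is `cov`, with labels in the
linearly ordered set `(Λ, lle, llt)`: every interval has a unique rising maximal
chain, which moreover is lexicographically least among all maximal chains of the
interval. -/
def IsELLabeling (α Λ : Type) (lle llt : Λ → Λ → Prop)
    (cov : α → α → Prop) (lam : α → α → Λ) : Prop :=
  ∀ x y : α, Relation.ReflTransGen cov x y →
    ∃ l : List α, (IsMaxChainList cov x y l ∧ (labelsList lam l).Chain' lle) ∧
      (∀ l' : List α, IsMaxChainList cov x y l' →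
        (labelsList lam l').Chain' lle → l' = l) ∧
      (∀ l' : List α, IsMaxChainList cov x y l' →
        labelsList lam l = labelsList lam l' ∨
          List.Lex llt (labelsList lam l) (labelsList lam l'))

/-! ### Eulerian posets -/

/-- A graded poset is Eulerian if every nontrivial interval `[x,y]` has the
same number of elements of even rank as of odd rank. -/
def IsEulerian (α : Type) [PartialOrder α] (rk : α → ℕ) : Prop :=
  ∀ x y : α, x < y →
    Set.ncard {z : α | x ≤ z ∧ z ≤ y ∧ Even (rk z)} =
      Set.ncard {z : α | x ≤ z ∧ z ≤ y ∧ ¬ Even (rk z)}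

/-! ### The face lattice of the crosspolytope -/

/-- A face of the `n`-dimensional crosspolytope: a partial sign vector, i.e. the
pair `(S, ε)` of a subset `S ⊆ {1,…,n}` (the set of coordinates where the function
takes a value `some`) together with a sign function `ε` on `S`. -/
def CrossEl (n : ℕ) : Type := Fin n → Option Bool

/-- `(S,ε) ≤ (T,δ)` iff `S ⊆ T` and `δ` restricted to `S` is `ε`. -/
instance (n : ℕ) : PartialOrder (CrossEl n) where
  le f g := ∀ i s, f i = some s → g i = some s
  le_refl f i s h := h
  le_trans f g h fg gh i s hi := gh i s (fg i s hi)
  le_antisymm f g fg gf := by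
    funext i
    cases hf : f i with
    | some s => exact (fg i s hf).symm
    | none =>
      cases hg : g i with
      | some s => exact absurd (gf i s hg) (by simp [hf])
      | none => rfl

/-- The face lattice of the `n`-dimensional crosspolytope: all partial sign
vectors together with a new maximum element. -/
abbrev Cross (n : ℕ) : Type := WithTop (CrossEl n)

/-- The rank function of the face lattice of the crosspolytope:
`ρ(S,ε) = |S|` and the maximum has rank `n + 1`. -/
def crossRk (n : ℕ) : Cross n → ℕ
  | none => n + 1
  | some f => (Finset.univ.filter fun i : Fin n => (f i).isSome).card

/-- The minimal element (the empty face) of the crosspolytope face lattice. -/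
def crossBot (n : ℕ) : Cross n := WithTop.some (fun _ => none)

/-- The maximal element of the crosspolytope face lattice. -/
def crossTop (n : ℕ) : Cross n := ⊤

/-! ### Quasisymmetric functions -/

/-- The monomial quasisymmetric function `M_{(p₁,…,p_k)}`, as a formal power
series in the countably many commuting variables `t₁, t₂, …` (indexed by `ℕ`). -/
def MQ (R : Type) [CommRing R] (ps : List ℕ) : MvPowerSeries ℕ R :=
  fun m => if ((m.support.sort (· ≤ ·)).map fun i => m i) = ps then 1 else 0

/-- The `t`-part of a monomial in the variables `s` (index `none`) and
`t₁, t₂, …` (indices `some i`). -/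
def tpart (m : Option ℕ →₀ ℕ) : ℕ →₀ ℕ :=
  Finsupp.comapDomain some m (Option.some_injective ℕ).injOn

/-- The type B monomial quasisymmetric function `s^p · M_{(p₁,…,p_k)}`, a formal
power series in the variables `s` (index `none`) and `t₁, t₂, …` (indices `some i`). -/
def MB (R : Type) [CommRing R] (p : ℕ) (ps : List ℕ) : MvPowerSeries (Option ℕ) R :=
  fun m => if m none = p ∧
      (((tpart m).support.sort (· ≤ ·)).map fun i => tpart m i) = ps then 1 else 0

/-- The quasisymmetric function `F(P)` of the graded poset with strict order
relation `lt`, rank function `rk`, minimum `b` and maximum `t`: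
`F(P) = Σ_c M_{(ρ(x₀,x₁),…,ρ(x_{k-1},x_k))}` over all chains `c` from `b` to `t`. -/
def FQ (R : Type) [CommRing R] {α : Type} (lt : α → α → Prop) (rk : α → ℕ)
    (b t : α) : MvPowerSeries ℕ R :=
  ∑ᶠ (n : ℕ), ∑ᶠ (f : Fin (n + 1) → α)
    (_ : IsStrictChain lt f ∧ f 0 = b ∧ f (Fin.last n) = t),
    MQ R (List.ofFn fun i : Fin n => rk (f i.succ) - rk (f i.castSucc))

/-- The type B quasisymmetric function `F_B(P) = Σ_{0̂ < x ≤ 1̂} s^{ρ(x)-1}·F([x,1̂])`,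
written as a sum over all chains `0̂ < x₀ < x₁ < ⋯ < x_k = 1̂` of
`s^{ρ(x₀)-1}·M_{(ρ(x₀,x₁),…,ρ(x_{k-1},x_k))}`. -/
def FB (R : Type) [CommRing R] {α : Type} (lt : α → α → Prop) (rk : α → ℕ)
    (b t : α) : MvPowerSeries (Option ℕ) R :=
  ∑ᶠ (n : ℕ), ∑ᶠ (f : Fin (n + 1) → α)
    (_ : IsStrictChain lt f ∧ lt b (f 0) ∧ f (Fin.last n) = t),
    MB R (rk (f 0) - 1) (List.ofFn fun i : Fin n => rk (f i.succ) - rk (f i.castSucc))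

/-! ### Characters and the chain maps -/

/-- A character on `k⟨a,b⟩`: a linear functional which is multiplicative with
respect to Cartesian products of graded posets (of rank at least 1). -/
def IsCharacter (k : Type) [Field k] (G : AB k →ₗ[k] k) : Prop :=
  ∀ (α β : Type) [Fintype α] [Fintype β] [PartialOrder α] [PartialOrder β]
    [BoundedOrder α] [BoundedOrder β], ∀ (rkα : α → ℕ) (rkβ : β → ℕ),
    IsRankFun α rkα → IsRankFun β rkβ → 1 ≤ rkα ⊤ → 1 ≤ rkβ ⊤ →
    G (PsiRel k (· < ·) (fun p : α × β => rkα p.1 + rkβ p.2)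
        ((⊥ : α), (⊥ : β)) ((⊤ : α), (⊤ : β))) =
      G (PsiRel k (· < ·) rkα ⊥ ⊤) * G (PsiRel k (· < ·) rkβ ⊥ ⊤)

/-- The quasisymmetric function image `g̃F(P)` of the chain map of the second kind:
`Σ_c G(Ψ([x₀,x₁])) ⋯ G(Ψ([x_{k-1},x_k])) · M_{(ρ(x₀,x₁),…,ρ(x_{k-1},x_k))}`,
summed over all chains `c = {b = x₀ < ⋯ < x_k = t}`. -/
def gtF (k : Type) [Field k] (G : AB k →ₗ[k] k) {α : Type} (lt : α → α → Prop)
    (rk : α → ℕ) (b t : α) : MvPowerSeries ℕ k :=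
  ∑ᶠ (n : ℕ), ∑ᶠ (f : Fin (n + 1) → α)
    (_ : IsStrictChain lt f ∧ f 0 = b ∧ f (Fin.last n) = t),
    (∏ i : Fin n, G (PsiRel k lt rk (f i.castSucc) (f i.succ))) •
      MQ k (List.ofFn fun i : Fin n => rk (f i.succ) - rk (f i.castSucc))

/-- The type B quasisymmetric function image `gF_B(P) = Σ_{0̂ < x ≤ 1̂}
s^{ρ(x)-1}·g̃F([x,1̂])` of the chain map of the first kind, written as a sum over
all chains `0̂ < x₀ < ⋯ < x_k = 1̂`. -/
def gFB (k : Type) [Field k] (G : AB k →ₗ[k] k) {α : Type} (lt : α → α → Prop)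
    (rk : α → ℕ) (b t : α) : MvPowerSeries (Option ℕ) k :=
  ∑ᶠ (n : ℕ), ∑ᶠ (f : Fin (n + 1) → α)
    (_ : IsStrictChain lt f ∧ lt b (f 0) ∧ f (Fin.last n) = t),
    (∏ i : Fin n, G (PsiRel k lt rk (f i.castSucc) (f i.succ))) •
      MB k (rk (f 0) - 1) (List.ofFn fun i : Fin n => rk (f i.succ) - rk (f i.castSucc))

/-- The space of homogeneous ab-polynomials of degree `n`. -/
def ABhomog (k : Type) [Field k] (n : ℕ) : Submodule k (AB k) :=
  Submodule.span k {x : AB k | ∃ w : List Bool, w.length = n ∧ x = word k w}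

/-! ### Helper lemmas -/

theorem h_onBasis_word {M : Type} [AddCommMonoid M] [Module ℤ M] (f : List Bool → M)
    (w : List Bool) : onBasis ℤ f (word ℤ w) = f w := by
  simp [onBasis, word, MonoidAlgebra.coeffLinearEquiv]

theorem h_word_cons (x : Bool) (w : List Bool) :
    word ℤ [x] * word ℤ w = word ℤ (x :: w) := by
  unfold word
  rw [← map_mul, ← FreeMonoid.ofList_append]
  rfl

theorem h_A_nil : Amap ℤ (word ℤ []) = 1 := by
  simp [Amap, word]

theorem h_A_cons (x : Bool) (w : List Bool) :
    Amap ℤ (word ℤ (x :: w)) = (if x then 1 else 0) * Amap ℤ (word ℤ w) := by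
  rw [← h_word_cons, map_mul]
  congr 1
  simp [Amap, word]

theorem h_C_word (w : List Bool) : Cmap ℤ (word ℤ w) = 2 * Amap ℤ (word ℤ w) +
    ∑ i ∈ Finset.range w.length,
      Amap ℤ (word ℤ (w.take i)) * Amap ℤ (word ℤ (w.drop (i + 1))) := by
  simp [Cmap, Delta, h_onBasis_word, map_sum]

theorem h_C_nil : Cmap ℤ (word ℤ []) = 2 := by
  simp [h_C_word, h_A_nil]

theorem h_C_cons (x : Bool) (w : List Bool) :
    Cmap ℤ (word ℤ (x :: w)) =
      (if x then Cmap ℤ (word ℤ w) else 0) + Amap ℤ (word ℤ w) := by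
  rw [h_C_word, h_C_word, List.length_cons, Finset.sum_range_succ']
  cases x <;> simp [h_A_cons, h_A_nil, add_assoc]

theorem h_kappa_word (w : List Bool) :
    kappa ℤ (word ℤ w) = Amap ℤ (word ℤ w) • ev ℤ ^ w.length := h_onBasis_word _ _

theorem h_nu_word (w : List Bool) :
    nuMap ℤ (word ℤ w) = Cmap ℤ (word ℤ w) • ev ℤ ^ w.length := h_onBasis_word _ _

theorem h_kappa_nil : kappa ℤ (word ℤ []) = 1 := by
  simp [h_kappa_word, h_A_nil]

theorem h_nu_nil : nuMap ℤ (word ℤ []) = 2 := by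
  simp [h_nu_word, h_C_nil]

theorem h_kappa_true (w : List Bool) :
    kappa ℤ (word ℤ (true :: w)) = ev ℤ * kappa ℤ (word ℤ w) := by
  simp only [h_kappa_word, h_A_cons, List.length_cons, pow_succ', if_true, one_mul,
    mul_smul_comm]

theorem h_kappa_false (w : List Bool) : kappa ℤ (word ℤ (false :: w)) = 0 := by
  simp [h_kappa_word, h_A_cons]

theorem h_nu_true (w : List Bool) :
    nuMap ℤ (word ℤ (true :: w)) =
      ev ℤ * nuMap ℤ (word ℤ w) + ev ℤ * kappa ℤ (word ℤ w) := by
  simp only [h_kappa_word, h_nu_word, h_C_cons, List.length_cons, pow_succ', if_true,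
    add_smul, mul_smul_comm]

theorem h_nu_false (w : List Bool) :
    nuMap ℤ (word ℤ (false :: w)) = ev ℤ * kappa ℤ (word ℤ w) := by
  simp only [h_kappa_word, h_nu_word, h_C_cons, List.length_cons, pow_succ', mul_smul_comm,
    Bool.false_eq_true, if_false, zero_add]

/-- Prepend a letter to the first segment. -/
def consHead (x : Bool) : List (List Bool) → List (List Bool)
  | [] => []
  | s :: r => (x :: s) :: r

theorem h_seg_ne (w : List Bool) (L : List ℕ) : segments w L ≠ [] := by
  cases L <;> simp [segments]

theorem h_seg_succ (x : Bool) (w : List Bool) (L : List ℕ) :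
    segments (x :: w) (L.map (· + 1)) = consHead x (segments w L) := by
  cases L with
  | nil => simp [segments, consHead]
  | cons i r =>
    simp [segments, consHead, Function.comp_def]

theorem h_seg_zero (x : Bool) (w : List Bool) (L : List ℕ) :
    segments (x :: w) (0 :: L.map (· + 1)) = [] :: segments w L := by
  simp [segments, Function.comp_def]

/-- Sum over all cuttings of a word. -/
def cutSum (φ : List (List Bool) → AB ℤ) (w : List Bool) : AB ℤ :=
  ∑ S : Finset (Fin w.length), φ (segments w ((S.sort (· ≤ ·)).map Fin.val))

theorem h_sum_finset (n : ℕ) (f : List ℕ → AB ℤ) :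
    ∑ S : Finset (Fin (n + 1)), f ((S.sort (· ≤ ·)).map Fin.val) =
      ∑ S : Finset (Fin n), (f (((S.sort (· ≤ ·)).map Fin.val).map (· + 1)) +
        f (0 :: ((S.sort (· ≤ ·)).map Fin.val).map (· + 1))) := by
  have hs : ∀ S : Finset (Fin n), (S.map (Fin.succEmb n)).sort (· ≤ ·) =
      (S.sort (· ≤ ·)).map Fin.succ := by
    intro S
    rw [← Finset.map_sort (Fin.succEmb n) S (· ≤ ·) (· ≤ ·) (by simp)]
    rfl
  have hu : (Finset.univ : Finset (Finset (Fin (n + 1)))) =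
      (insert 0 (Finset.univ.map (Fin.succEmb n))).powerset := by
    rw [← Finset.powerset_univ]
    congr 1
    ext i
    refine Fin.cases ?_ ?_ i <;> simp
  have h0 : (0 : Fin (n + 1)) ∉ Finset.univ.map (Fin.succEmb n) := by simp
  have hi : ∀ g : Finset (Fin (n + 1)) → AB ℤ,
      ∑ t ∈ (Finset.univ.map (Fin.succEmb n)).powerset, g t =
      ∑ S : Finset (Fin n), g (S.map (Fin.succEmb n)) := by
    intro g
    symm
    refine Finset.sum_bij (fun S _ => S.map (Fin.succEmb n)) ?_ ?_ ?_ ?_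
    · intro S _
      simp only [Finset.mem_powerset]
      exact Finset.map_subset_map.2 (Finset.subset_univ _)
    · intro S _ S' _ h
      exact Finset.map_injective _ h
    · intro t ht
      obtain ⟨S, _, hS⟩ := Finset.subset_map_iff.1 (Finset.mem_powerset.1 ht)
      exact ⟨S, Finset.mem_univ _, hS.symm⟩
    · intros
      rfl
  rw [hu, Finset.sum_powerset_insert h0, hi, hi, ← Finset.sum_add_distrib]
  refine Finset.sum_congr rfl fun S _ => ?_
  rw [Finset.sort_insert (· ≤ ·) (by simp) (by simp), hs]
  simp [Function.comp_def]

theorem h_cutSum_cons (φ : List (List Bool) → AB ℤ) (x : Bool) (w : List Bool) :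
    cutSum φ (x :: w) =
      cutSum (fun l => φ (consHead x l)) w + cutSum (fun l => φ ([] :: l)) w := by
  unfold cutSum
  rw [← Finset.sum_add_distrib]
  refine (h_sum_finset w.length (fun L => φ (segments (x :: w) L))).trans ?_
  refine Finset.sum_congr rfl fun S _ => ?_
  rw [h_seg_succ, h_seg_zero]

theorem h_cutSum_congr (φ ψ : List (List Bool) → AB ℤ) (w : List Bool)
    (h : ∀ s r, φ (s :: r) = ψ (s :: r)) : cutSum φ w = cutSum ψ w := by
  refine Finset.sum_congr rfl fun S _ => ?_
  have := h_seg_ne w ((S.sort (· ≤ ·)).map Fin.val)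
  revert this
  cases segments w ((S.sort (· ≤ ·)).map Fin.val) with
  | nil => simp
  | cons s r => intro _; exact h s r

theorem h_cutSum_add (φ ψ : List (List Bool) → AB ℤ) (w : List Bool) :
    cutSum (fun l => φ l + ψ l) w = cutSum φ w + cutSum ψ w :=
  Finset.sum_add_distrib

theorem h_cutSum_mul (x : AB ℤ) (φ : List (List Bool) → AB ℤ) (w : List Bool) :
    cutSum (fun l => x * φ l) w = x * cutSum φ w :=
  (Finset.mul_sum _ _ _).symm

/-- The chain product with `κ` on the first segment, over cuttings with at least one cut. -/
def chainK : List (List Bool) → AB ℤ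
  | [] => 0
  | [_] => 0
  | s :: t :: r => kappa ℤ (word ℤ s) * bv ℤ * chainProd ℤ (t :: r)

theorem h_T_word (w : List Bool) : Tmap ℤ (word ℤ w) = cutSum (chainProd ℤ) w :=
  h_onBasis_word _ _

theorem h_T_true (w : List Bool) : cutSum (chainProd ℤ) (true :: w) =
    ev ℤ * cutSum (chainProd ℤ) w + ev ℤ * cutSum chainK w
      + 2 * bv ℤ * cutSum (chainProd ℤ) w := by
  rw [h_cutSum_cons, ← h_cutSum_mul, ← h_cutSum_mul, ← h_cutSum_mul,
    ← h_cutSum_add (fun l => ev ℤ * chainProd ℤ l)]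
  congr 1
  · refine h_cutSum_congr _ _ _ fun s r => ?_
    cases r <;> simp [consHead, chainProd, chainK, h_kappa_true, h_nu_true, add_mul, mul_assoc]
  · refine h_cutSum_congr _ _ _ fun s r => ?_
    simp [chainProd, h_nu_nil]

theorem h_T_false (w : List Bool) : cutSum (chainProd ℤ) (false :: w) =
    ev ℤ * cutSum chainK w + 2 * bv ℤ * cutSum (chainProd ℤ) w := by
  rw [h_cutSum_cons, ← h_cutSum_mul, ← h_cutSum_mul]
  congr 1
  · refine h_cutSum_congr _ _ _ fun s r => ?_
    cases r <;> simp [consHead, chainProd, chainK, h_kappa_false, h_nu_false, mul_assoc]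
  · refine h_cutSum_congr _ _ _ fun s r => ?_
    simp [chainProd, h_nu_nil]

theorem h_K_true (w : List Bool) : cutSum chainK (true :: w) =
    ev ℤ * cutSum chainK w + bv ℤ * cutSum (chainProd ℤ) w := by
  rw [h_cutSum_cons, ← h_cutSum_mul, ← h_cutSum_mul]
  congr 1
  · refine h_cutSum_congr _ _ _ fun s r => ?_
    cases r <;> simp [consHead, chainK, h_kappa_true, mul_assoc]
  · refine h_cutSum_congr _ _ _ fun s r => ?_
    simp [chainK, h_kappa_nil]

theorem h_K_false (w : List Bool) : cutSum chainK (false :: w) =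
    bv ℤ * cutSum (chainProd ℤ) w := by
  rw [h_cutSum_cons, ← h_cutSum_mul, ← zero_add (cutSum (fun l => bv ℤ * chainProd ℤ l) w)]
  congr 1
  · rw [← zero_mul (cutSum chainK w), ← h_cutSum_mul]
    refine h_cutSum_congr _ _ _ fun s r => ?_
    cases r <;> simp [consHead, chainK, h_kappa_false]
  · refine h_cutSum_congr _ _ _ fun s r => ?_
    simp [chainK, h_kappa_nil]

theorem h_main_word (w : List Bool) :
    Tmap ℤ (cv ℤ ^ 2 * word ℤ w)
      = 2 * cv ℤ * Tmap ℤ (cv ℤ * word ℤ w) + (2 * dv ℤ - cv ℤ ^ 2) * Tmap ℤ (word ℤ w) := by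
  have h1 : cv ℤ * word ℤ w = word ℤ (true :: w) + word ℤ (false :: w) := by
    rw [cv, add_mul, av, bv, h_word_cons, h_word_cons]
  have h2 : cv ℤ ^ 2 * word ℤ w = word ℤ (true :: true :: w) + word ℤ (false :: true :: w)
      + (word ℤ (true :: false :: w) + word ℤ (false :: false :: w)) := by
    rw [pow_two, mul_assoc, h1, cv]
    simp only [add_mul, mul_add, av, bv, h_word_cons]
  rw [h1, h2]
  simp only [map_add, h_T_word, h_T_true, h_T_false, h_K_true, h_K_false]
  simp only [cv, dv, ev]
  generalize cutSum (chainProd ℤ) w = t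
  generalize cutSum chainK w = k
  generalize av ℤ = a
  generalize bv ℤ = b
  noncomm_ring

theorem tchebyshev_c_squared_recursion (u : AB ℤ) :
    Tmap ℤ (cv ℤ ^ 2 * u)
      = 2 * cv ℤ * Tmap ℤ (cv ℤ * u) + (2 * dv ℤ - cv ℤ ^ 2) * Tmap ℤ u := by
  induction u using MonoidAlgebra.induction_on with
  | of m => exact h_main_word m.toList
  | add x y hx hy =>
    simp only [mul_add, map_add] at *
    rw [hx, hy]
    abel
  | smul r x hx =>
    simp only [mul_smul_comm, map_smul] at *
    rw [hx, smul_add]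


end Tcheb
end
end

section
/- For all graded posets P and Q of rank at least 1, the ab-index of the Tchebyshev transform of the Cartesian product equals the ab-index of the dual diamond product of the two Tchebyshev transforms: Ψ(T(P × Q)) = Ψ(T(P) ◇* T(Q)). -/
open scoped TensorProduct

noncomputable section

namespace Tcheb

/-! ### Helper lemmas: comparing ab-indices through a common projection -/

theorem isStrictChain_cons {A : Type} {lt : A → A → Prop}
    (htr : ∀ x y z, lt x y → lt y z → lt x z) {n : ℕ} (a : A) (f : Fin (n + 1) → A) :
    IsStrictChain lt (Fin.cons a f : Fin (n + 1 + 1) → A) ↔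
      lt a (f 0) ∧ IsStrictChain lt f := by
  constructor
  · intro h
    refine ⟨?_, ?_⟩
    · have := h 0 1 (by simp)
      simpa using this
    · intro i j hij
      have := h i.succ j.succ (by simpa using hij)
      simpa using this
  · rintro ⟨h0, h⟩ i j hij
    have h0' : ∀ j, lt a (f j) := by
      intro j
      by_cases hj : j = 0
      · subst hj; exact h0
      · exact htr _ _ _ h0 (h 0 j (Fin.pos_of_ne_zero hj))
    induction j using Fin.cases with
    | zero => exact absurd hij (by simp)
    | succ j =>
      induction i using Fin.cases with
      | zero => simpa using h0' j
      | succ i => simpa using h i j (by simpa using hij)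

/-- The factor contributed by the first step of a chain. -/
def stepWt (n i j : ℕ) : AB ℤ :=
  ev ℤ ^ (j - i - 1) * (if n = 0 then 1 else bv ℤ)

theorem chainWt_cons {A : Type} (rk : A → ℕ) {n : ℕ} (a : A) (f : Fin (n + 1) → A) :
    chainWt ℤ rk (Fin.cons a f : Fin (n + 1 + 1) → A) =
      stepWt n (rk a) (rk (f 0)) * chainWt ℤ rk f := by
  unfold chainWt stepWt
  rw [List.ofFn_succ]
  cases n with
  | zero => simp
  | succ n =>
    have h2 : (Fin.cons a f : Fin (n + 1 + 1 + 1) → A) 2 = f 1 := rfl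
    simp only [List.ofFn_succ]
    simp [mul_assoc, h2]

open Classical in
/-- Sum of the weights of chains with `n` steps from `a` to `t`. -/
def chSum {A : Type} [Fintype A] (lt : A → A → Prop) (rk : A → ℕ) (t : A) (n : ℕ) (a : A) :
    AB ℤ :=
  ∑ f : Fin (n + 1) → A,
    if IsStrictChain lt f ∧ f 0 = a ∧ f (Fin.last n) = t then chainWt ℤ rk f else 0

theorem psiRel_eq {A : Type} [Fintype A] (lt : A → A → Prop) (rk : A → ℕ) (b t : A) :
    PsiRel ℤ lt rk b t = ∑ᶠ n : ℕ, chSum lt rk t n b := by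
  classical
  unfold PsiRel chSum
  refine finsum_congr fun n => ?_
  rw [finsum_eq_sum_of_fintype]
  refine Finset.sum_congr rfl fun f _ => ?_
  rw [finsum_eq_if]

open Classical in
theorem chSum_zero {A : Type} [Fintype A] (lt : A → A → Prop) (rk : A → ℕ) (t a : A) :
    chSum lt rk t 0 a = if a = t then 1 else 0 := by
  unfold chSum
  rw [← (Equiv.funUnique (Fin 1) A).symm.sum_comp]
  have h : ∀ x : A, IsStrictChain lt ((Equiv.funUnique (Fin 1) A).symm x) := by
    intro x i j hij
    exact absurd hij (by omega)
  simp only [h, true_and, chainWt]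
  rw [Finset.sum_eq_single a]
  · simp
  · intro x _ hx
    refine if_neg ?_
    simp [hx]
  · simp

open Classical in
theorem chSum_succ {A : Type} [Fintype A] (lt : A → A → Prop)
    (htr : ∀ x y z, lt x y → lt y z → lt x z) (rk : A → ℕ) (t : A) (n : ℕ) (a : A) :
    chSum lt rk t (n + 1) a =
      ∑ x : {x : A // lt a x}, stepWt n (rk a) (rk x.1) * chSum lt rk t n x.1 := by
  have h1 : ∀ x : A, stepWt n (rk a) (rk x) * chSum lt rk t n x =
      ∑ f : Fin (n + 1) → A, if f 0 = x then
        (if IsStrictChain lt f ∧ f (Fin.last n) = t then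
          stepWt n (rk a) (rk (f 0)) * chainWt ℤ rk f else 0) else 0 := by
    intro x
    unfold chSum
    rw [Finset.mul_sum]
    refine Finset.sum_congr rfl fun f _ => ?_
    by_cases h : f 0 = x
    · subst h; simp
    · simp [h]
  have h2 : ∑ x : {x : A // lt a x}, stepWt n (rk a) (rk x.1) * chSum lt rk t n x.1 =
      ∑ x : A, if lt a x then stepWt n (rk a) (rk x) * chSum lt rk t n x else 0 := by
    rw [← Finset.sum_filter]
    exact (Finset.sum_subtype (Finset.univ.filter fun x => lt a x) (by simp)
      (fun x => stepWt n (rk a) (rk x) * chSum lt rk t n x)).symm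
  have h3 : ∀ x : A, (if lt a x then stepWt n (rk a) (rk x) * chSum lt rk t n x else 0) =
      ∑ f : Fin (n + 1) → A, if f 0 = x then
        (if lt a (f 0) ∧ IsStrictChain lt f ∧ f (Fin.last n) = t then
          stepWt n (rk a) (rk (f 0)) * chainWt ℤ rk f else 0) else 0 := by
    intro x
    split_ifs with hx
    · rw [h1]
      refine Finset.sum_congr rfl fun f _ => ?_
      by_cases h : f 0 = x
      · subst h; simp [hx]
      · simp [h]
    · symm
      refine Finset.sum_eq_zero fun f _ => ?_
      by_cases h : f 0 = x
      · subst h; simp [hx]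
      · simp [h]
  rw [h2, Finset.sum_congr rfl fun x _ => h3 x, Finset.sum_comm]
  unfold chSum
  rw [← (Fin.consEquiv fun _ : Fin (n + 1 + 1) => A).sum_comp, Fintype.sum_prod_type,
    Finset.sum_comm]
  refine Finset.sum_congr rfl fun f _ => ?_
  rw [Finset.sum_ite_eq Finset.univ (f 0)]
  rw [Finset.sum_eq_single a]
  · simp only [Fin.consEquiv, Equiv.coe_fn_mk, isStrictChain_cons htr, chainWt_cons,
      ← Fin.succ_last, Fin.cons_succ, Fin.cons_zero]
    simp [and_assoc]
  · intro x _ hx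
    refine if_neg ?_
    simp [Fin.consEquiv, hx]
  · simp

/-- Two posets projecting to the same set with equinumerous fibres of the up-sets have the
same ab-index. -/
theorem psiRel_congr {A B C : Type} [Finite A] [Finite B]
    (ltA : A → A → Prop) (ltB : B → B → Prop)
    (hA : ∀ x y z, ltA x y → ltA y z → ltA x z) (hB : ∀ x y z, ltB x y → ltB y z → ltB x z)
    (rkA : A → ℕ) (rkB : B → ℕ) (bA tA : A) (bB tB : B)
    (pA : A → C) (pB : B → C) (hb : pA bA = pB bB)
    (ht : ∀ a b, pA a = pB b → (a = tA ↔ b = tB))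
    (hrk : ∀ a b, pA a = pB b → rkA a = rkB b)
    (hcard : ∀ a b, pA a = pB b → ∀ c,
      Nat.card {x : A // ltA a x ∧ pA x = c} = Nat.card {x : B // ltB b x ∧ pB x = c}) :
    PsiRel ℤ ltA rkA bA tA = PsiRel ℤ ltB rkB bB tB := by
  classical
  have := Fintype.ofFinite A
  have := Fintype.ofFinite B
  rw [psiRel_eq, psiRel_eq]
  refine finsum_congr fun n => ?_
  have key : ∀ n a b, pA a = pB b → chSum ltA rkA tA n a = chSum ltB rkB tB n b := by
    intro n
    induction n with
    | zero =>
      intro a b h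
      simp only [chSum_zero, ht a b h]
    | succ n ih =>
      intro a b h
      rw [chSum_succ ltA hA, chSum_succ ltB hB]
      have e1 : ∀ c, {x : {x : A // ltA a x} // pA x.1 = c} ≃
          {x : {x : B // ltB b x} // pB x.1 = c} := fun c =>
        (Equiv.subtypeSubtypeEquivSubtypeInter (fun x => ltA a x) (fun x => pA x = c)).trans
          ((Classical.choice (Finite.card_eq.1 (hcard a b h c))).trans
            (Equiv.subtypeSubtypeEquivSubtypeInter
              (fun x => ltB b x) (fun x => pB x = c)).symm)
      let E : {x : A // ltA a x} ≃ {x : B // ltB b x} :=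
        ((Equiv.sigmaFiberEquiv fun x : {x : A // ltA a x} => pA x.1).symm.trans
          (Equiv.sigmaCongrRight e1)).trans
          (Equiv.sigmaFiberEquiv fun x : {x : B // ltB b x} => pB x.1)
      have hE : ∀ x, pA x.1 = pB (E x).1 := fun x => (e1 (pA x.1) ⟨x, rfl⟩).2.symm
      rw [← E.sum_comp]
      refine Finset.sum_congr rfl fun x _ => ?_
      rw [ih _ _ (hE x), hrk _ _ (hE x), hrk a b h]
  exact key n _ _ hb

/-! ### The order of the Tchebyshev transform -/

section TOrder

variable {α : Type} [PartialOrder α] [BoundedOrder α]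

instance [Finite α] : Finite (TPel α) := by unfold TPel; infer_instance
instance [Finite α] : Finite (TP α) := by unfold TP; infer_instance

theorem TPlt_zmap {p q : TP α} (h : TPlt α p q) : zmap α p < zmap α q := by
  have step : ∀ p q : TP α, TPcov α p q → zmap α p < zmap α q := by
    intro p q h
    cases h with
    | up h1 h2 hc => exact WithTop.coe_lt_coe.2 hc.lt
    | same h1 h2 hc => exact WithTop.coe_lt_coe.2 hc.lt
    | top h1 => exact WithTop.coe_lt_top _
  induction h with
  | single h => exact step _ _ h
  | tail _ h ih => exact ih.trans (step _ _ h)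

theorem TPle_same [Finite α] {x : WithBot α} {y w : α} (h : y ≤ w)
    (h1 : x < (y : WithBot α)) (h2 : x < (w : WithBot α)) :
    TPle α (some ⟨(x, y), h1⟩) (some ⟨(x, w), h2⟩) := by
  have := Fintype.ofFinite α
  classical
  have := Fintype.toLocallyFiniteOrder (α := α)
  have hr := le_iff_reflTransGen_covBy.1 h
  clear h
  induction hr with
  | refl => exact Relation.ReflTransGen.refl
  | @tail u v huv hc ih =>
    have hu : x < (u : WithBot α) :=
      h1.trans_le (WithBot.coe_le_coe.2 (le_iff_reflTransGen_covBy.2 huv))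
    exact (ih hu).tail (TPcov.same hu h2 hc)

theorem TPle_iff [Finite α] (p q : TPel α) :
    TPle α (some p) (some q) ↔
      (q.1.1 = p.1.1 ∧ p.1.2 ≤ q.1.2) ∨ (p.1.2 : WithBot α) ≤ q.1.1 := by
  constructor
  · intro h
    have gen : ∀ r : TP α, TPle α (some p) r → ∀ q : TPel α, r = some q →
        (q.1.1 = p.1.1 ∧ p.1.2 ≤ q.1.2) ∨ (p.1.2 : WithBot α) ≤ q.1.1 := by
      intro r hr
      induction hr with
      | refl =>
        intro q hq
        obtain rfl := Option.some.inj hq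
        exact Or.inl ⟨rfl, le_rfl⟩
      | tail _ hc ih =>
        intro q hq
        cases hc with
        | @up x y w h1 h2 hc =>
          obtain rfl := Option.some.inj hq
          right
          rcases ih _ rfl with h | h
          · exact WithBot.coe_le_coe.2 h.2
          · exact h.trans h1.le
        | @same x y w h1 h2 hc =>
          obtain rfl := Option.some.inj hq
          rcases ih _ rfl with h | h
          · exact Or.inl ⟨h.1, h.2.trans hc.le⟩
          · exact Or.inr h
        | top h1 => exact absurd hq (by simp)
    exact gen _ h q rfl
  · obtain ⟨⟨x, y⟩, hp⟩ := p
    obtain ⟨⟨x', y'⟩, hq⟩ := q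
    simp only
    rintro (⟨rfl, h⟩ | h)
    · exact TPle_same h hp hq
    · simp only at hp hq
      have hx' : x' ≠ ⊥ := by
        rintro rfl
        exact absurd h (by simp)
      obtain ⟨v, rfl⟩ := WithBot.ne_bot_iff_exists.1 hx'
      have hyv : y ≤ v := WithBot.coe_le_coe.1 h
      have hvw : v < y' := WithBot.coe_lt_coe.1 hq
      obtain ⟨u, hu, huw⟩ := exists_covBy_le_of_lt hvw
      have hxv : x < (v : WithBot α) := hp.trans_le h
      have hvu : (v : WithBot α) < (u : WithBot α) := WithBot.coe_lt_coe.2 hu.lt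
      exact ((TPle_same hyv hp hxv).tail (TPcov.up hxv hvu hu)).trans (TPle_same huw hvu hq)

theorem TPlt_some_iff (p q : TPel α) :
    TPlt α (some p) (some q) ↔ TPle α (some p) (some q) ∧ p.1.2 ≠ q.1.2 := by
  constructor
  · intro h
    refine ⟨h.to_reflTransGen, fun he => ?_⟩
    have := TPlt_zmap h
    simp [zmap, he] at this
  · rintro ⟨h, hne⟩
    rcases Relation.reflTransGen_iff_eq_or_transGen.1 h with h | h
    · exact absurd (congrArg (fun r : TPel α => r.1.2) (Option.some.inj h)).symm hne
    · exact h

theorem TPlt_top [Finite α] (p : TPel α) : TPlt α (some p) (TPtop α) := by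
  obtain ⟨⟨x, y⟩, hp⟩ := p
  have hx : x < ((⊤ : α) : WithBot α) := hp.trans_le (WithBot.coe_le_coe.2 le_top)
  exact Relation.TransGen.tail' (TPle_same le_top hp hx) (TPcov.top hx)

theorem not_TPlt_top (q : TP α) : ¬ TPlt α (TPtop α) q := by
  intro h
  have := TPlt_zmap h
  simp [zmap, TPtop] at this

/-- The fibre count in the Tchebyshev transform. -/
theorem card_fibre [Finite α] (p : TPel α) (w : α) :
    Nat.card {q : TPel α // TPle α (some p) (some q) ∧ q.1.2 = w} =
      Nat.card {t : α // p.1.2 ≤ t ∧ t ≤ w} := by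
  classical
  obtain ⟨⟨x, y⟩, hp⟩ := p
  simp only at hp ⊢
  symm
  refine Nat.card_eq_of_bijective (fun t : {t : α // y ≤ t ∧ t ≤ w} =>
    if h : t.1 = w then
      ⟨⟨(x, w), hp.trans_le (WithBot.coe_le_coe.2 (t.2.1.trans t.2.2))⟩,
        (TPle_iff _ _).2 (Or.inl ⟨rfl, t.2.1.trans t.2.2⟩), rfl⟩
    else
      ⟨⟨((t.1 : WithBot α), w), WithBot.coe_lt_coe.2 (lt_of_le_of_ne t.2.2 h)⟩,
        (TPle_iff _ _).2 (Or.inr (WithBot.coe_le_coe.2 t.2.1)), rfl⟩) ⟨?_, ?_⟩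
  · have key : ∀ t : α, y ≤ t → x ≠ (t : WithBot α) := fun t ht =>
      (hp.trans_le (WithBot.coe_le_coe.2 ht)).ne
    rintro ⟨s, hs1, hs2⟩ ⟨t, ht1, ht2⟩ hst
    have hst' := congrArg (fun r : {q : TPel α // TPle α (some ⟨(x, y), hp⟩) (some q) ∧
      q.1.2 = w} => r.1.1.1) hst
    simp only at hst'
    refine Subtype.ext ?_
    show s = t
    split_ifs at hst' with h1 h2 h2
    · exact h1.trans h2.symm
    · exact absurd hst' (key t ht1)
    · exact absurd hst'.symm (key s hs1)
    · exact WithBot.coe_injective hst'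
  · rintro ⟨⟨⟨x', y'⟩, hq⟩, hle, rfl⟩
    have hq' : x' < (y' : WithBot α) := hq
    have h := (TPle_iff _ _).1 hle
    simp only at h
    rcases h with ⟨rfl, h⟩ | h
    · refine ⟨⟨y', h, le_rfl⟩, ?_⟩
      simp
    · have hx' : x' ≠ ⊥ := by
        rintro rfl
        exact absurd h (by simp)
      obtain ⟨v, rfl⟩ := WithBot.ne_bot_iff_exists.1 hx'
      have hvw : v < y' := WithBot.coe_lt_coe.1 hq'
      refine ⟨⟨v, WithBot.coe_le_coe.1 h, hvw.le⟩, ?_⟩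
      simp [hvw.ne]

/-- The elements of the Tchebyshev transform below the top. -/
def tpEquiv (α : Type) [PartialOrder α] [BoundedOrder α] :
    TPel α ≃ {x : TP α // x ≠ TPtop α} where
  toFun p := ⟨some p, Option.some_ne_none p⟩
  invFun x := Option.get (α := TPel α) x.1 (Option.isSome_iff_ne_none.2 x.2)
  left_inv _ := rfl
  right_inv _ := Subtype.ext (Option.some_get (α := TPel α) _)

/-- Projection to the upper endpoint. -/
def projT (α : Type) [PartialOrder α] [BoundedOrder α] (x : TP α) : Option α :=
  Option.map (fun p : TPel α => p.1.2) x

theorem card_projT [Finite α] (p : TPel α) (c : α) (hc : p.1.2 ≠ c) :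
    Nat.card {x : TP α // TPlt α (some p) x ∧ projT α x = some c} =
      Nat.card {t : α // p.1.2 ≤ t ∧ t ≤ c} := by
  rw [← card_fibre]
  symm
  refine Nat.card_eq_of_bijective (fun q => ⟨some q.1, ?_, ?_⟩) ⟨?_, ?_⟩
  · exact (TPlt_some_iff _ _).2 ⟨q.2.1, by rw [q.2.2]; exact hc⟩
  · exact congrArg some q.2.2
  · intro q r h
    exact Subtype.ext (Option.some.inj (congrArg Subtype.val h))
  · rintro ⟨x, hx, hxc⟩
    cases x with
    | none => exact absurd hxc (by simp [projT])
    | some q => exact ⟨⟨q, hx.to_reflTransGen, Option.some.inj hxc⟩, rfl⟩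

end TOrder

section Diamond

variable {α β : Type} [PartialOrder α] [PartialOrder β] [BoundedOrder α] [BoundedOrder β]

/-- The elements of the dual diamond product of two Tchebyshev transforms. -/
abbrev DD (α β : Type) [PartialOrder α] [PartialOrder β] [BoundedOrder α] [BoundedOrder β] :
    Type :=
  Option ({x : TP α // x ≠ TPtop α} × {x : TP β // x ≠ TPtop β})

/-- The strict order of the dual diamond product of two Tchebyshev transforms. -/
abbrev DDlt (α β : Type) [PartialOrder α] [PartialOrder β] [BoundedOrder α] [BoundedOrder β] :
    DD α β → DD α β → Prop :=
  dsLT (fun x y : {x : TP α // x ≠ TPtop α} => TPle α x.1 y.1)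
    (fun x y : {x : TP α // x ≠ TPtop α} => TPlt α x.1 y.1)
    (fun x y : {x : TP β // x ≠ TPtop β} => TPle β x.1 y.1)
    (fun x y : {x : TP β // x ≠ TPtop β} => TPlt β x.1 y.1)

theorem DDlt_trans (x y z : DD α β) (hxy : DDlt α β x y) (hyz : DDlt α β y z) :
    DDlt α β x z := by
  match x, y, z, hxy, hyz with
  | some x, some y, some z, ⟨⟨h1, h2⟩, h3⟩, ⟨⟨h4, h5⟩, _⟩ =>
    refine ⟨⟨h1.trans h4, h2.trans h5⟩, ?_⟩
    rcases h3 with h3 | h3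
    · exact Or.inl (Relation.TransGen.trans_left h3 h4)
    · exact Or.inr (Relation.TransGen.trans_left h3 h5)
  | some x, some y, none, _, _ => exact trivial

/-- Projection to the pair of upper endpoints. -/
def projD (α β : Type) [PartialOrder α] [PartialOrder β] [BoundedOrder α] [BoundedOrder β]
    (x : DD α β) : Option (α × β) :=
  Option.map (fun p => (((tpEquiv α).symm p.1).1.2, ((tpEquiv β).symm p.2).1.2)) x

theorem card_projD [Finite α] [Finite β] (p : TPel α) (q : TPel β) (c : α × β)
    (hc : (p.1.2, q.1.2) ≠ c) :
    Nat.card {x : DD α β // DDlt α β (some (tpEquiv α p, tpEquiv β q)) x ∧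
        projD α β x = some c} =
      Nat.card {t : α × β // (p.1.2, q.1.2) ≤ t ∧ t ≤ c} := by
  have e : {t : α × β // (p.1.2, q.1.2) ≤ t ∧ t ≤ c} ≃
      {t : α // p.1.2 ≤ t ∧ t ≤ c.1} × {t : β // q.1.2 ≤ t ∧ t ≤ c.2} :=
    { toFun := fun t => (⟨t.1.1, t.2.1.1, t.2.2.1⟩, ⟨t.1.2, t.2.1.2, t.2.2.2⟩)
      invFun := fun t => ⟨(t.1.1, t.2.1), ⟨t.1.2.1, t.2.2.1⟩, ⟨t.1.2.2, t.2.2.2⟩⟩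
      left_inv := fun _ => rfl
      right_inv := fun _ => rfl }
  rw [Nat.card_congr e, Nat.card_prod, ← card_fibre, ← card_fibre, ← Nat.card_prod]
  symm
  refine Nat.card_eq_of_bijective
    (fun r => ⟨some (tpEquiv α r.1.1, tpEquiv β r.2.1), ⟨⟨r.1.2.1, r.2.2.1⟩, ?_⟩, ?_⟩) ⟨?_, ?_⟩
  · by_contra hcon
    rw [not_or] at hcon
    apply hc
    have h1 : p.1.2 = r.1.1.1.2 := by
      by_contra hne
      exact hcon.1 ((TPlt_some_iff _ _).2 ⟨r.1.2.1, hne⟩)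
    have h2 : q.1.2 = r.2.1.1.2 := by
      by_contra hne
      exact hcon.2 ((TPlt_some_iff _ _).2 ⟨r.2.2.1, hne⟩)
    exact Prod.ext (h1.trans r.1.2.2) (h2.trans r.2.2.2)
  · have : (r.1.1.1.2, r.2.1.1.2) = c := Prod.ext r.1.2.2 r.2.2.2
    simp [projD, this]
  · intro r s h
    have h' := Option.some.inj (congrArg Subtype.val h)
    have h1 := (tpEquiv α).injective (congrArg Prod.fst h')
    have h2 := (tpEquiv β).injective (congrArg Prod.snd h')
    exact Prod.ext (Subtype.ext h1) (Subtype.ext h2)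
  · rintro ⟨x, hx, hxc⟩
    match x, hx, hxc with
    | none, _, hxc => exact absurd hxc (by simp [projD])
    | some (u, v), hx, hxc =>
      obtain ⟨u, rfl⟩ := (tpEquiv α).surjective u
      obtain ⟨v, rfl⟩ := (tpEquiv β).surjective v
      have h' := Option.some.inj hxc
      exact ⟨(⟨u, hx.1.1, congrArg Prod.fst h'⟩, ⟨v, hx.1.2, congrArg Prod.snd h'⟩), rfl⟩

theorem card_eq_main [Finite α] [Finite β] (a : TP (α × β)) (b : DD α β)
    (h : projT (α × β) a = projD α β b) (c : Option (α × β)) :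
    Nat.card {x : TP (α × β) // TPlt (α × β) a x ∧ projT (α × β) x = c} =
      Nat.card {x : DD α β // DDlt α β b x ∧ projD α β x = c} := by
  match a, b, h with
  | none, none, _ =>
    have : IsEmpty {x : TP (α × β) // TPlt (α × β) (none : Option (TPel (α × β))) x ∧
        projT (α × β) x = c} := ⟨fun x => not_TPlt_top _ x.2.1⟩
    have : IsEmpty {x : DD α β // DDlt α β none x ∧ projD α β x = c} := ⟨fun x => x.2.1⟩
    rw [Nat.card_of_isEmpty, Nat.card_of_isEmpty]
  | none, some _, h => exact absurd h (by simp [projT, projD])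
  | some _, none, h => exact absurd h (by simp [projT, projD])
  | some p, some (q, r), h =>
    obtain ⟨q, rfl⟩ := (tpEquiv α).surjective q
    obtain ⟨r, rfl⟩ := (tpEquiv β).surjective r
    have h' : p.1.2 = (q.1.2, r.1.2) := Option.some.inj h
    cases c with
    | none =>
      have e1 : Nat.card {x : TP (α × β) // TPlt (α × β) (some p) x ∧
          projT (α × β) x = none} = 1 := by
        rw [Nat.card_eq_one_iff_unique]
        refine ⟨⟨?_⟩, ⟨⟨none, TPlt_top p, rfl⟩⟩⟩
        rintro ⟨x, _, hx⟩ ⟨y, _, hy⟩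
        exact Subtype.ext ((Option.map_eq_none_iff.1 hx).trans (Option.map_eq_none_iff.1 hy).symm)
      have e2 : Nat.card {x : DD α β // DDlt α β (some (tpEquiv α q, tpEquiv β r)) x ∧
          projD α β x = none} = 1 := by
        rw [Nat.card_eq_one_iff_unique]
        refine ⟨⟨?_⟩, ⟨⟨none, trivial, rfl⟩⟩⟩
        rintro ⟨x, _, hx⟩ ⟨y, _, hy⟩
        exact Subtype.ext ((Option.map_eq_none_iff.1 hx).trans (Option.map_eq_none_iff.1 hy).symm)
      exact e1.trans e2.symm
    | some c =>
      by_cases hc : (q.1.2, r.1.2) = c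
      · have : IsEmpty {x : TP (α × β) // TPlt (α × β) (some p) x ∧
            projT (α × β) x = some c} := by
          refine ⟨?_⟩
          rintro ⟨x, hx, hxc⟩
          match x, hx, hxc with
          | some x, hx, hxc =>
            exact ((TPlt_some_iff _ _).1 hx).2 ((h'.trans hc).trans (Option.some.inj hxc).symm)
        have : IsEmpty {x : DD α β // DDlt α β (some (tpEquiv α q, tpEquiv β r)) x ∧
            projD α β x = some c} := by
          refine ⟨?_⟩
          rintro ⟨x, hx, hxc⟩
          match x, hx, hxc with
          | some (u, v), hx, hxc =>
            obtain ⟨u, rfl⟩ := (tpEquiv α).surjective u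
            obtain ⟨v, rfl⟩ := (tpEquiv β).surjective v
            have h2 : (q.1.2, r.1.2) = (u.1.2, v.1.2) := hc.trans (Option.some.inj hxc).symm
            rcases hx.2 with h3 | h3
            · exact ((TPlt_some_iff _ _).1 h3).2 (Prod.ext_iff.1 h2).1
            · exact ((TPlt_some_iff _ _).1 h3).2 (Prod.ext_iff.1 h2).2
        have e1 := Nat.card_of_isEmpty (α := {x : TP (α × β) // TPlt (α × β) (some p) x ∧
            projT (α × β) x = some c})
        have e2 := Nat.card_of_isEmpty (α := {x : DD α β //
            DDlt α β (some (tpEquiv α q, tpEquiv β r)) x ∧ projD α β x = some c})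
        exact e1.trans e2.symm
      · have e1 := card_projT p c (by rw [h']; exact hc)
        have e2 := card_projD q r c hc
        rw [h'] at e1
        exact e1.trans e2.symm

end Diamond

theorem tchebyshev_product_diamond
    (α β : Type) [Fintype α] [Fintype β] [PartialOrder α] [PartialOrder β]
    [BoundedOrder α] [BoundedOrder β] (rkα : α → ℕ) (rkβ : β → ℕ)
    (hα : IsRankFun α rkα) (hβ : IsRankFun β rkβ)
    (h1α : 1 ≤ rkα (⊤ : α)) (h1β : 1 ≤ rkβ (⊤ : β)) :
    PsiRel ℤ (TPlt (α × β)) (TPrk (α × β) fun p => rkα p.1 + rkβ p.2)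
        (TPbot (α × β)) (TPtop (α × β)) =
      PsiRel ℤ
        (dsLT (fun x y : {x : TP α // x ≠ TPtop α} => TPle α x.1 y.1)
              (fun x y : {x : TP α // x ≠ TPtop α} => TPlt α x.1 y.1)
              (fun x y : {x : TP β // x ≠ TPtop β} => TPle β x.1 y.1)
              (fun x y : {x : TP β // x ≠ TPtop β} => TPlt β x.1 y.1))
        (fun d => match d with
          | none => (rkα ⊤ + 1) + (rkβ ⊤ + 1) - 1
          | some p => TPrk α rkα p.1.1 + TPrk β rkβ p.2.1)
        (some (⟨TPbot α, TPbot_ne_TPtop α⟩, ⟨TPbot β, TPbot_ne_TPtop β⟩))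
        none := by
  refine psiRel_congr (C := Option (α × β)) (TPlt (α × β)) (DDlt α β)
    (fun _ _ _ h1 h2 => Relation.TransGen.trans h1 h2) DDlt_trans _ _ _ _ _ _
    (projT (α × β)) (projD α β) rfl ?_ ?_ card_eq_main
  · intro a b h
    match a, b, h with
    | none, none, _ => exact ⟨fun _ => rfl, fun _ => rfl⟩
    | none, some _, h => exact absurd h (by simp [projT, projD])
    | some _, none, h => exact absurd h (by simp [projT, projD])
    | some p, some q, _ => exact ⟨fun h => absurd h (by simp [TPtop]), fun h => absurd h (by simp)⟩
  · intro a b h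
    match a, b, h with
    | none, none, _ =>
      show rkα ⊤ + rkβ ⊤ + 1 = (rkα ⊤ + 1) + (rkβ ⊤ + 1) - 1
      omega
    | none, some _, h => exact absurd h (by simp [projT, projD])
    | some _, none, h => exact absurd h (by simp [projT, projD])
    | some p, some (q, r), h =>
      obtain ⟨q, rfl⟩ := (tpEquiv α).surjective q
      obtain ⟨r, rfl⟩ := (tpEquiv β).surjective r
      have h' : p.1.2 = (q.1.2, r.1.2) := Option.some.inj h
      show rkα p.1.2.1 + rkβ p.1.2.2 = rkα q.1.2 + rkβ r.1.2
      rw [h']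

end Tcheb
end
end

section
/- The Tchebyshev transform of the second kind is a coalgebra homomorphism: for every u ∈ ℤ⟨a,b⟩, Δ(U(u)) = Σ_u U(u_(1)) ⊗ U(u_(2)); equivalently, Δ ∘ U = (U ⊗ U) ∘ Δ. -/
open scoped TensorProduct

noncomputable section

namespace Tcheb

section Proof

variable {R : Type} [CommRing R]

lemma onBasis_word {M : Type} [AddCommMonoid M] [Module R M] (f : List Bool → M) (w : List Bool) :
    onBasis R f (word R w) = f w := by
  simp [onBasis, word]

lemma word_mul (v w : List Bool) : word R v * word R w = word R (v ++ w) := by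
  simp [word, MonoidAlgebra.single_mul_single]

lemma word_nil : word R [] = 1 := by
  simp [word, MonoidAlgebra.one_def]

lemma ab_ext {M : Type} [AddCommMonoid M] [Module R M] {f g : AB R →ₗ[R] M}
    (h : ∀ w, f (word R w) = g (word R w)) : f = g := by
  apply MonoidAlgebra.lhom_ext'
  intro w
  ext
  simpa [word] using h (FreeMonoid.toList w)

lemma ab_induction {P : AB R → Prop} (h : ∀ w, P (word R w)) (ha : ∀ x y, P x → P y → P (x + y))
    (hs : ∀ (r : R) x, P x → P (r • x)) (x : AB R) : P x := by
  induction x using MonoidAlgebra.induction_on with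
  | of w => exact h (FreeMonoid.toList w)
  | add x y hx hy => exact ha x y hx hy
  | smul r x hx => exact hs r x hx

lemma Delta_word (w : List Bool) : Delta R (word R w) = ∑ i ∈ Finset.range w.length,
    word R (w.take i) ⊗ₜ[R] word R (w.drop (i + 1)) := onBasis_word _ _

lemma mulLeft_add' (x y : AB R) :
    LinearMap.mulLeft R (x + y) = LinearMap.mulLeft R x + LinearMap.mulLeft R y := by
  apply LinearMap.ext; intro z; simp [add_mul]

lemma mulLeft_smul' (r : R) (x : AB R) :
    LinearMap.mulLeft R (r • x) = r • LinearMap.mulLeft R x := by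
  apply LinearMap.ext; intro z; simp

lemma mulRight_add' (x y : AB R) :
    LinearMap.mulRight R (x + y) = LinearMap.mulRight R x + LinearMap.mulRight R y := by
  apply LinearMap.ext; intro z; simp [mul_add]

lemma mulRight_smul' (r : R) (x : AB R) :
    LinearMap.mulRight R (r • x) = r • LinearMap.mulRight R x := by
  apply LinearMap.ext; intro z; simp

lemma Delta_mul (x y : AB R) : Delta R (x * y) =
    TensorProduct.map LinearMap.id (LinearMap.mulRight R y) (Delta R x) +
    TensorProduct.map (LinearMap.mulLeft R x) LinearMap.id (Delta R y) := by
  induction x using ab_induction with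
  | ha x₁ x₂ h₁ h₂ =>
    rw [add_mul, map_add, h₁, h₂, map_add, map_add, mulLeft_add',
      TensorProduct.map_add_left, LinearMap.add_apply]
    abel
  | hs r x h =>
    rw [smul_mul_assoc, map_smul, h, map_smul, map_smul, mulLeft_smul',
      TensorProduct.map_smul_left, LinearMap.smul_apply, smul_add]
  | h v =>
  induction y using ab_induction with
  | ha x₁ x₂ h₁ h₂ =>
    rw [mul_add, map_add, h₁, h₂, map_add, map_add, mulRight_add',
      TensorProduct.map_add_right, LinearMap.add_apply]
    abel
  | hs r x h =>
    rw [mul_smul_comm, map_smul, h, map_smul, map_smul, mulRight_smul',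
      TensorProduct.map_smul_right, LinearMap.smul_apply, smul_add]
  | h w =>
    rw [word_mul, Delta_word, Delta_word, Delta_word, List.length_append, Finset.sum_range_add,
      map_sum, map_sum]
    congr 1
    · refine Finset.sum_congr rfl fun i hi => ?_
      have := Finset.mem_range.1 hi
      simp only [TensorProduct.map_tmul, LinearMap.mulRight_apply, LinearMap.id_apply, word_mul]
      rw [List.take_append_of_le_length (by omega), List.drop_append_of_le_length (by omega)]
    · refine Finset.sum_congr rfl fun i hi => ?_
      simp only [TensorProduct.map_tmul, LinearMap.mulLeft_apply, LinearMap.id_apply, word_mul]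
      rw [List.take_length_add_append, add_assoc, List.drop_length_add_append]

lemma Delta_one : Delta R 1 = 0 := by
  rw [← word_nil, Delta_word]; simp

lemma Delta_bv : Delta R (bv R) = 1 ⊗ₜ 1 := by
  rw [bv, Delta_word]; simp [word_nil]

lemma Delta_ev : Delta R (ev R) = 0 := by
  rw [ev, map_sub, av, bv, Delta_word, Delta_word]; simp

lemma Delta_ev_pow (n : ℕ) : Delta R (ev R ^ n) = 0 := by
  induction n with
  | zero => rw [pow_zero, Delta_one]
  | succ n ih => rw [pow_succ, Delta_mul, ih, Delta_ev]; simp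

/-- nu on words -/
def nw (w : List Bool) : AB R := nuMap R (word R w)

lemma Delta_nw (w : List Bool) : Delta R (nw w) = 0 := by
  rw [nw, nuMap, onBasis_word, map_smul, Delta_ev_pow, smul_zero]

/-- The solution of the recursion for `U`. -/
def Vw (w : List Bool) : AB R :=
  nw w + ∑ i : Fin w.length, nw (w.take i) * bv R * Vw (w.drop (i + 1))
  termination_by w.length
  decreasing_by
    have := i.2
    rw [List.length_drop]
    omega

lemma Vw_eq (w : List Bool) : Vw w =
    nw w + ∑ i ∈ Finset.range w.length, nw (w.take i) * bv R * Vw (w.drop (i + 1)) := by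
  rw [Vw, Finset.sum_range]

lemma Delta_Vw (w : List Bool) : Delta R (Vw w) =
    ∑ i ∈ Finset.range w.length, Vw (w.take i) ⊗ₜ[R] Vw (w.drop (i + 1)) := by
  induction hn : w.length using Nat.strong_induction_on generalizing w with
  | _ n ih =>
  subst hn
  have h1 : ∀ i ∈ Finset.range w.length,
      Delta R (nw (w.take i) * bv R * Vw (w.drop (i + 1))) =
      nw (w.take i) ⊗ₜ[R] Vw (w.drop (i + 1)) +
      ∑ j ∈ Finset.range (w.length - (i + 1)),
        (nw (w.take i) * bv R * Vw ((w.take (i + 1 + j)).drop (i + 1)))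
          ⊗ₜ[R] Vw (w.drop (i + 1 + j + 1)) := by
    intro i hi
    have hi := Finset.mem_range.1 hi
    rw [Delta_mul, Delta_mul, Delta_nw, Delta_bv, ih _ (by simp; omega) _ rfl]
    simp only [map_zero, zero_add, map_sum, TensorProduct.map_tmul, LinearMap.mulLeft_apply,
      LinearMap.mulRight_apply, LinearMap.id_apply, mul_one, one_mul, List.length_drop]
    congr 1
    refine Finset.sum_congr rfl fun j hj => ?_
    rw [List.drop_drop, List.drop_take, Nat.add_sub_cancel_left]
    simp [add_assoc]
  rw [Vw_eq, map_add, Delta_nw, zero_add, map_sum, Finset.sum_congr rfl h1,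
    Finset.sum_add_distrib]
  have h2 : ∀ i ∈ Finset.range w.length,
      Vw (R := R) (w.take i) ⊗ₜ[R] Vw (R := R) (w.drop (i + 1)) = nw (w.take i) ⊗ₜ[R] Vw (w.drop (i + 1)) +
      ∑ j ∈ Finset.range i, (nw (w.take j) * bv R * Vw ((w.take i).drop (j + 1)))
          ⊗ₜ[R] Vw (w.drop (i + 1)) := by
    intro i hi
    have hi := Finset.mem_range.1 hi
    rw [Vw_eq (w.take i), TensorProduct.add_tmul, TensorProduct.sum_tmul]
    congr 1
    rw [List.length_take, min_eq_left hi.le]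
    refine Finset.sum_congr rfl fun j hj => ?_
    have hj := Finset.mem_range.1 hj
    rw [List.take_take, min_eq_left hj.le]
  rw [Finset.sum_congr rfl h2, Finset.sum_add_distrib]
  congr 1
  rw [Finset.sum_sigma', Finset.sum_sigma']
  refine Finset.sum_bij' (fun p _ => ⟨p.1 + 1 + p.2, p.1⟩) (fun p _ => ⟨p.2, p.1 - (p.2 + 1)⟩)
    ?_ ?_ ?_ ?_ ?_
  · rintro ⟨i, j⟩ h; simp at h ⊢; omega
  · rintro ⟨i, j⟩ h; simp at h ⊢; omega
  · rintro ⟨i, j⟩ h; simp at h ⊢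
  · rintro ⟨i, j⟩ h; simp at h ⊢; omega
  · rintro ⟨i, j⟩ h; rfl

/-- Recursive form of a sum over subsets. -/
def Lsum {M : Type} [AddCommMonoid M] : ℕ → (List ℕ → M) → M
  | 0, F => F []
  | n + 1, F => Lsum n (fun l => F (l.map (· + 1))) + Lsum n (fun l => F (0 :: l.map (· + 1)))

lemma sort_map_succ {n : ℕ} (S : Finset (Fin n)) :
    (S.map (Fin.succEmb n)).sort (· ≤ ·) = (S.sort (· ≤ ·)).map Fin.succ := by
  symm
  exact Finset.map_sort (Fin.succEmb n) S (· ≤ ·) (· ≤ ·) (by simp)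

lemma sum_eq_Lsum {M : Type} [AddCommMonoid M] (n : ℕ) (F : List ℕ → M) :
    ∑ S : Finset (Fin n), F ((S.sort (· ≤ ·)).map Fin.val) = Lsum n F := by
  induction n generalizing F with
  | zero =>
    rw [Fintype.sum_eq_single ∅ (fun S hS => absurd (Finset.eq_empty_of_isEmpty S) hS)]
    simp [Lsum]
  | succ n ih =>
    have h0 : (0 : Fin (n + 1)) ∉ Finset.univ.image Fin.succ := by simp
    have hu : (Finset.univ : Finset (Fin (n + 1))) = insert 0 (Finset.univ.image Fin.succ) := by
      rw [Fin.univ_succ, Finset.cons_eq_insert, Finset.map_eq_image]; rfl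
    have hinj : Set.InjOn (fun S : Finset (Fin n) => S.image Fin.succ)
        ((Finset.univ : Finset (Fin n)).powerset : Set (Finset (Fin n))) :=
      fun S _ S' _ h => Finset.image_injective (Fin.succ_injective n) h
    have hs : ∀ S : Finset (Fin n), (S.image Fin.succ).sort (· ≤ ·) =
        (S.sort (· ≤ ·)).map Fin.succ := fun S => by
      rw [← sort_map_succ, Finset.map_eq_image]; rfl
    rw [Lsum, ← ih, ← ih, ← Finset.powerset_univ, hu, Finset.sum_powerset_insert h0,
      Finset.powerset_image, Finset.sum_image hinj, Finset.sum_image hinj, Finset.powerset_univ]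
    congr 1
    · refine Finset.sum_congr rfl fun S _ => ?_
      rw [hs]; simp [Function.comp_def]
    · refine Finset.sum_congr rfl fun S _ => ?_
      rw [Finset.sort_insert _ (by simp) (by simp), hs]; simp [Function.comp_def]

lemma Lsum_first {M : Type} [AddCommMonoid M] (n : ℕ) (F : List ℕ → M) :
    Lsum n F = F [] + ∑ i ∈ Finset.range n,
      Lsum (n - (i + 1)) (fun l => F (i :: l.map (· + (i + 1)))) := by
  induction n generalizing F with
  | zero => simp [Lsum]
  | succ n ih =>
    rw [Lsum, ih, Finset.sum_range_succ']
    simp [Function.comp_def, add_assoc]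

/-- `T` on words. -/
def Tw (w : List Bool) : AB R := Tmap R (word R w)

lemma segments_ne_nil (w : List Bool) (l : List ℕ) : segments w l ≠ [] := by
  cases l <;> simp [segments]

lemma chainProd_cons (s : List Bool) (r : List (List Bool)) (h : r ≠ []) :
    chainProd R (s :: r) = nw s * bv R * chainProd R r := by
  cases r with
  | nil => exact absurd rfl h
  | cons a r => simp [chainProd, nw]

lemma Lsum_mul (n : ℕ) (x : AB R) (F : List ℕ → AB R) :
    Lsum n (fun l => x * F l) = x * Lsum n F := by
  rw [← sum_eq_Lsum, ← sum_eq_Lsum, Finset.mul_sum]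

lemma Tw_eq_Lsum (w : List Bool) : Tw w = Lsum w.length fun l => chainProd R (segments w l) := by
  rw [Tw, Tmap, onBasis_word, ← sum_eq_Lsum]

lemma Tw_eq (w : List Bool) : Tw w =
    kappa R (word R w) +
      ∑ i ∈ Finset.range w.length, nw (w.take i) * bv R * Tw (w.drop (i + 1)) := by
  rw [Tw_eq_Lsum, Lsum_first]
  congr 1
  · simp [segments, chainProd]
  refine Finset.sum_congr rfl fun i hi => ?_
  rw [Tw_eq_Lsum, ← Lsum_mul, List.length_drop]
  congr 1
  funext l
  rw [segments, chainProd_cons _ _ (segments_ne_nil _ _)]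
  simp [Function.comp_def]

lemma kappa_snoc (w : List Bool) :
    kappa R (word R (w ++ [true])) = kappa R (word R w) * ev R := by
  simp only [kappa, onBasis_word]
  rw [← word_mul, map_mul]
  have : Amap R (word R [true]) = 1 := by
    simp [Amap, word]
  rw [this]
  simp [pow_succ]

lemma Tw_nil : Tw (R := R) [] = 1 := by
  rw [Tw_eq, kappa, onBasis_word]; simp [word_nil]

lemma Tw_snoc (w : List Bool) : Tw (R := R) (w ++ [true]) = Vw w * bv R + Tw w * ev R := by
  induction hn : w.length using Nat.strong_induction_on generalizing w with
  | _ n ih =>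
  subst hn
  rw [Tw_eq, kappa_snoc, List.length_append, List.length_singleton, Finset.sum_range_succ,
    Vw_eq, Tw_eq w]
  have : ∀ i ∈ Finset.range w.length, nw (R := R) ((w ++ [true]).take i) * bv R *
      Tw ((w ++ [true]).drop (i + 1)) = nw (w.take i) * bv R * Vw (w.drop (i + 1)) * bv R +
        nw (w.take i) * bv R * Tw (w.drop (i + 1)) * ev R := by
    intro i hi
    have hi := Finset.mem_range.1 hi
    rw [List.take_append_of_le_length (by omega), List.drop_append_of_le_length (by omega),
      ih _ (by simp; omega) _ rfl]
    simp only [mul_add, mul_assoc]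
  rw [Finset.sum_congr rfl this, Finset.sum_add_distrib]
  simp only [add_mul, Finset.sum_mul]
  have h2 : (w ++ [true]).drop (w.length + 1) = [] := by simp
  rw [h2, Tw_nil]
  simp only [List.take_left, mul_one]
  abel

lemma Hstar_mul (x : AB R) (c : Bool) : Hstar R (x * word R [c]) = x := by
  induction x using ab_induction with
  | ha x y h1 h2 => rw [add_mul, map_add, h1, h2]
  | hs r x h => rw [smul_mul_assoc, map_smul, h]
  | h w => rw [word_mul, Hstar, onBasis_word]; simp

lemma Umap_word (w : List Bool) : Umap R (word R w) = Vw w := by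
  have : Umap R (word R w) = Hstar R (Tw (w ++ [true])) := by
    simp [Umap, Tw, av, word_mul]
  rw [this, Tw_snoc, map_add, ev, mul_sub, map_sub, av, bv, Hstar_mul, Hstar_mul, Hstar_mul]
  simp

end Proof

theorem U_coalgebra_hom :
    Delta ℤ ∘ₗ Umap ℤ = TensorProduct.map (Umap ℤ) (Umap ℤ) ∘ₗ Delta ℤ := by
  apply ab_ext
  intro w
  simp only [LinearMap.comp_apply, Umap_word, Delta_Vw, Delta_word, map_sum, TensorProduct.map_tmul]

end Tcheb
end
end
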